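/- arXiv:2209.09977 — 3 statements merged into one kernel-verified Lean document; each statement's English description precedes it below -/
import Mathlib

section
/- Let n ≥ 1, M ≥ 1, let μ̂⁽¹⁾, …, μ̂⁽ᴹ⁾ ∈ ℝⁿ, and let Σ̂⁽¹⁾, …, Σ̂⁽ᴹ⁾ be n×n positive semidefinite matrices. Define μ̄ = (1/M) Σₘ μ̂⁽ᵐ⁾ and Σ* = (1/M) Σₘ [Σ̂⁽ᵐ⁾ + (μ̂⁽ᵐ⁾ − μ̄)(μ̂⁽ᵐ⁾ − μ̄)ᵀ], and assume Σ* is positive definite. Then the function L₁(μ₀, Σ₀) = M·log det(2π Σ₀) + tr( Σ₀⁻¹ Σₘ [Σ̂⁽ᵐ⁾ + (μ̂⁽ᵐ⁾ − μ₀)(μ̂⁽ᵐ⁾ − μ₀)ᵀ] ), defined for μ₀ ∈ ℝⁿ and Σ₀ positive definite, attains its global minimum at (μ₀, Σ₀) = (μ̄, Σ*). -/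
open Matrix

/-!
Minimize in two stages. For a fixed covariance `T`, moving the center of the scatter matrix from
the mean `a` to `c` adds a multiple of `(a - c)(a - c)ᵀ` (the cross terms vanish), and the trace of
`T⁻¹` against this rank-one matrix is nonnegative. At the mean the scatter matrix is `M Σ*`, so the
remaining claim is `log det Σ* + n ≤ log det T + tr (T⁻¹ Σ*)`. Factoring `T⁻¹ = Bᴴ B`, this is
`log det A ≤ tr A - n` for `A = B Σ* Bᴴ`, which is `log t ≤ t - 1` summed over the eigenvalues
of `A`.
-/

section LogDet

variable {ι : Type*} [Fintype ι] [DecidableEq ι] {A P T : Matrix ι ι ℝ}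

theorem log_det_le_trace_sub_card (hA : A.PosDef) :
    Real.log A.det ≤ A.trace - Fintype.card ι := by
  let eig := hA.isHermitian.eigenvalues
  have eig_pos (i : ι) : 0 < eig i := hA.eigenvalues_pos i
  calc
    Real.log A.det = ∑ i, Real.log (eig i) := by
      rw [hA.isHermitian.det_eq_prod_eigenvalues]
      exact Real.log_prod fun i _ ↦ (eig_pos i).ne'
    _ ≤ ∑ i, (eig i - 1) :=
      Finset.sum_le_sum fun i _ ↦ Real.log_le_sub_one_of_pos (eig_pos i)
    _ = A.trace - Fintype.card ι := by
      simp [hA.isHermitian.trace_eq_sum_eigenvalues, eig]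

open scoped MatrixOrder in
theorem log_det_add_log_det_le_trace_mul_sub_card (hP : P.PosDef) (hA : A.PosDef) :
    Real.log P.det + Real.log A.det ≤ (P * A).trace - Fintype.card ι := by
  obtain ⟨B, rfl⟩ : ∃ B, P = Bᴴ * B :=
    CStarAlgebra.nonneg_iff_eq_star_mul_self.mp hP.posSemidef.nonneg
  have det_congr : (B * A * Bᴴ).det = (Bᴴ * B).det * A.det := by
    simp only [det_mul]
    ring
  have trace_congr : (B * A * Bᴴ).trace = (Bᴴ * B * A).trace := by
    rw [trace_mul_comm, Matrix.mul_assoc]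
  have posDef_congr : (B * A * Bᴴ).PosDef := by
    rw [(hA.posSemidef.mul_mul_conjTranspose_same B).posDef_iff_det_ne_zero, det_congr]
    exact mul_ne_zero hP.det_pos.ne' hA.det_pos.ne'
  rw [← Real.log_mul hP.det_pos.ne' hA.det_pos.ne', ← det_congr, ← trace_congr]
  exact log_det_le_trace_sub_card posDef_congr

theorem log_det_add_card_le_log_det_add_trace_inv_mul (hA : A.PosDef) (hT : T.PosDef) :
    Real.log A.det + Fintype.card ι ≤ Real.log T.det + (T⁻¹ * A).trace := by
  have log_det_inv : Real.log T⁻¹.det = -Real.log T.det := by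
    rw [det_nonsing_inv, Ring.inverse_eq_inv', Real.log_inv]
  linarith [log_det_add_log_det_le_trace_mul_sub_card hT.inv hA]

theorem log_det_smul {r : ℝ} (hr : r ≠ 0) (hA : A.det ≠ 0) :
    Real.log (r • A).det = Fintype.card ι * Real.log r + Real.log A.det := by
  rw [det_smul, Real.log_mul (pow_ne_zero _ hr) hA, Real.log_pow]

end LogDet

section VecMulVecSum

variable {ι ι' κ R : Type*} [NonUnitalNonAssocSemiring R]

theorem sum_vecMulVec (s : Finset κ) (v : κ → ι → R) (w : ι' → R) :
    vecMulVec (∑ k ∈ s, v k) w = ∑ k ∈ s, vecMulVec (v k) w := by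
  ext i j
  simp [Matrix.sum_apply, vecMulVec_apply, Finset.sum_mul]

theorem vecMulVec_sum (s : Finset κ) (v : ι → R) (w : κ → ι' → R) :
    vecMulVec v (∑ k ∈ s, w k) = ∑ k ∈ s, vecMulVec v (w k) := by
  ext i j
  simp [Matrix.sum_apply, vecMulVec_apply, Finset.mul_sum]

end VecMulVecSum

theorem trace_mul_vecMulVec_star_nonneg {ι R : Type*} [Fintype ι] [CommRing R] [PartialOrder R]
    [StarRing R] {P : Matrix ι ι R} (hP : P.PosSemidef) (v : ι → R) :
    0 ≤ (P * vecMulVec v (star v)).trace := by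
  rw [mul_vecMulVec, trace_vecMulVec, dotProduct_comm]
  exact hP.dotProduct_mulVec_nonneg v

theorem sum_sub_eq_zero_of_eq_inv_card_smul_sum {κ K E : Type*} [Fintype κ] [DivisionRing K]
    [CharZero K] [AddCommGroup E] [Module K E] {x : κ → E} {a : E}
    (ha : a = (Fintype.card κ : K)⁻¹ • ∑ k, x k) : ∑ k, (x k - a) = 0 := by
  cases isEmpty_or_nonempty κ
  · exact Fintype.sum_empty _
  · have card_ne_zero : (Fintype.card κ : K) ≠ 0 := Nat.cast_ne_zero.mpr Fintype.card_ne_zero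
    rw [Finset.sum_sub_distrib, Finset.sum_const, Finset.card_univ, ← Nat.cast_smul_eq_nsmul K,
      ha, smul_inv_smul₀ card_ne_zero, sub_self]

section Scatter

variable {ι κ R : Type*} [Fintype κ]

/-- The scatter matrix about `c` of points `x k` that carry covariances `S k` of their own. It is
the sum over `k`, not the average; for distributions with means `x k` and covariances `S k` it
collects their second moments about `c`. -/
def scatterMatrix [NonUnitalNonAssocRing R] (x : κ → ι → R) (S : κ → Matrix ι ι R) (c : ι → R) :
    Matrix ι ι R :=
  ∑ k, (S k + vecMulVec (x k - c) (x k - c))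

theorem scatterMatrix_eq_add_card_nsmul_vecMulVec [NonUnitalNonAssocRing R] {x : κ → ι → R}
    {a : ι → R} (ha : ∑ k, (x k - a) = 0) (S : κ → Matrix ι ι R) (c : ι → R) :
    scatterMatrix x S c =
      scatterMatrix x S a + Fintype.card κ • vecMulVec (a - c) (a - c) := by
  have expand (k : κ) : vecMulVec (x k - c) (x k - c) =
      vecMulVec (x k - a) (x k - a) + vecMulVec (x k - a) (a - c) +
        vecMulVec (a - c) (x k - a) + vecMulVec (a - c) (a - c) := by
    rw [← sub_add_sub_cancel (x k) a c, add_vecMulVec, vecMulVec_add, vecMulVec_add]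
    abel
  have cross_left : ∑ k, vecMulVec (x k - a) (a - c) = 0 := by
    rw [← sum_vecMulVec, ha, zero_vecMulVec]
  have cross_right : ∑ k, vecMulVec (a - c) (x k - a) = 0 := by
    rw [← vecMulVec_sum, ha, vecMulVec_zero]
  simp only [scatterMatrix, expand, Finset.sum_add_distrib, cross_left, cross_right,
    Finset.sum_const, Finset.card_univ, add_assoc, zero_add]

theorem trace_mul_scatterMatrix_le [Fintype ι] {P : Matrix ι ι ℝ} (hP : P.PosSemidef)
    {x : κ → ι → ℝ} {a : ι → ℝ} (ha : ∑ k, (x k - a) = 0) (S : κ → Matrix ι ι ℝ) (c : ι → ℝ) :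
    (P * scatterMatrix x S a).trace ≤ (P * scatterMatrix x S c).trace := by
  rw [scatterMatrix_eq_add_card_nsmul_vecMulVec ha S c, Matrix.mul_add, trace_add, Matrix.mul_smul,
    trace_smul]
  exact le_add_of_nonneg_right (nsmul_nonneg (trace_mul_vecMulVec_star_nonneg hP (a - c)) _)

end Scatter

section GaussianLoss

variable {ι κ : Type*} [Fintype ι] [DecidableEq ι] [Fintype κ]

/-- The loss `L₁` at mean `c` and covariance `T`: the sum over `k` of `-2` times the
expected Gaussian log-likelihood of a random vector with mean `x k` and covariance `S k`. It is
meaningful only for positive definite `T`; elsewhere `Real.log` and `T⁻¹` may take junk values. -/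
noncomputable def gaussianLoss (x : κ → ι → ℝ) (S : κ → Matrix ι ι ℝ) (c : ι → ℝ)
    (T : Matrix ι ι ℝ) : ℝ :=
  Fintype.card κ * Real.log ((2 * Real.pi) • T).det + (T⁻¹ * scatterMatrix x S c).trace

theorem gaussianLoss_le_of_sum_sub_eq_zero {x : κ → ι → ℝ} {a : ι → ℝ}
    (ha : ∑ k, (x k - a) = 0) (S : κ → Matrix ι ι ℝ) (c : ι → ℝ) {T : Matrix ι ι ℝ}
    (hT : T.PosDef) : gaussianLoss x S a T ≤ gaussianLoss x S c T :=
  add_le_add_right (trace_mul_scatterMatrix_le hT.inv.posSemidef ha S c) _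

theorem gaussianLoss_le_of_scatterMatrix_eq {x : κ → ι → ℝ} {S : κ → Matrix ι ι ℝ} {c : ι → ℝ}
    {A T : Matrix ι ι ℝ} (hscatter : scatterMatrix x S c = (Fintype.card κ : ℝ) • A)
    (hA : A.PosDef) (hT : T.PosDef) : gaussianLoss x S c A ≤ gaussianLoss x S c T := by
  have loss_eq {U : Matrix ι ι ℝ} (hU : U.PosDef) : gaussianLoss x S c U =
      Fintype.card κ * (Fintype.card ι * Real.log (2 * Real.pi) +
        (Real.log U.det + (U⁻¹ * A).trace)) := by
    rw [gaussianLoss, hscatter, log_det_smul Real.two_pi_pos.ne' hU.det_pos.ne', Matrix.mul_smul,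
      trace_smul, smul_eq_mul]
    ring
  have trace_inv_mul_self : (A⁻¹ * A).trace = Fintype.card ι := by
    rw [nonsing_inv_mul A hA.det_pos.ne'.isUnit, trace_one]
  rw [loss_eq hA, loss_eq hT, trace_inv_mul_self]
  gcongr _ * (_ + ?_)
  exact log_det_add_card_le_log_det_add_trace_inv_mul hA hT

theorem mstep_initial_condition_optimum_general [Nonempty κ] {x : κ → ι → ℝ}
    {S : κ → Matrix ι ι ℝ} {a : ι → ℝ} (ha : a = (Fintype.card κ : ℝ)⁻¹ • ∑ k, x k)
    {A : Matrix ι ι ℝ} (hA : A = (Fintype.card κ : ℝ)⁻¹ • scatterMatrix x S a)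
    (hApos : A.PosDef) (c : ι → ℝ) {T : Matrix ι ι ℝ} (hT : T.PosDef) :
    gaussianLoss x S a A ≤ gaussianLoss x S c T := by
  have scatter_eq : scatterMatrix x S a = (Fintype.card κ : ℝ) • A := by
    rw [hA, smul_inv_smul₀ (Nat.cast_ne_zero.mpr Fintype.card_ne_zero)]
  calc
    gaussianLoss x S a A ≤ gaussianLoss x S a T :=
      gaussianLoss_le_of_scatterMatrix_eq scatter_eq hApos hT
    _ ≤ gaussianLoss x S c T :=
      gaussianLoss_le_of_sum_sub_eq_zero (sum_sub_eq_zero_of_eq_inv_card_smul_sum ha) S c hT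

end GaussianLoss

/-- Theorem 3.1, initial-condition part: the loss
`L₁(μ₀, S₀) = M·log det(2π S₀) + tr(S₀⁻¹ Σₘ [Σ̂⁽ᵐ⁾ + (μ̂⁽ᵐ⁾ − μ₀)(μ̂⁽ᵐ⁾ − μ₀)ᵀ])`
attains its global minimum at the empirical mean `μ̄` and covariance `Σ*`. -/
theorem mstep_initial_condition_optimum (n M : ℕ) (hn : 1 ≤ n) (hM : 1 ≤ M)
    (μhat : Fin M → (Fin n → ℝ)) (Shat : Fin M → Matrix (Fin n) (Fin n) ℝ)
    (hShat : ∀ m, (Shat m).PosSemidef)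
    (μbar : Fin n → ℝ) (hμbar : μbar = (M : ℝ)⁻¹ • ∑ m, μhat m)
    (Sstar : Matrix (Fin n) (Fin n) ℝ)
    (hSstar : Sstar =
      (M : ℝ)⁻¹ • ∑ m, (Shat m + Matrix.vecMulVec (μhat m - μbar) (μhat m - μbar)))
    (hpd : Sstar.PosDef) :
    ∀ (μ₀ : Fin n → ℝ) (S₀ : Matrix (Fin n) (Fin n) ℝ), S₀.PosDef →
      (M : ℝ) * Real.log (((2 * Real.pi) • Sstar).det) +
          (Sstar⁻¹ *
            ∑ m, (Shat m + Matrix.vecMulVec (μhat m - μbar) (μhat m - μbar))).trace ≤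
        (M : ℝ) * Real.log (((2 * Real.pi) • S₀).det) +
          (S₀⁻¹ *
            ∑ m, (Shat m + Matrix.vecMulVec (μhat m - μ₀) (μhat m - μ₀))).trace := by
  intro μ₀ S₀ hS₀
  have : Nonempty (Fin M) := Fin.pos_iff_nonempty.mp hM
  simpa only [gaussianLoss, scatterMatrix, Fintype.card_fin] using
    mstep_initial_condition_optimum_general (x := μhat) (S := Shat) (by simpa using hμbar)
      (by simpa [scatterMatrix] using hSstar) hpd μ₀ hS₀
end

section
/- Let n ≥ 1, ML ≥ 1, and suppose the n×n matrix-valued function 𝒫' ↦ W(𝒫') on a parameter set is positive definite for every 𝒫'. If (Σ_w, 𝒫') minimizes (Σ, 𝒫') ↦ ML·log det(2π Σ) + tr(Σ⁻¹ W(𝒫')) over positive definite Σ and parameters 𝒫', then Σ_w = (1/(ML)) W(𝒫'), and 𝒫' minimizes 𝒫' ↦ log det W(𝒫'). -/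
open Matrix

/-!
For positive definite `S` and `V`, the product `S⁻¹ * V` is similar to a positive definite matrix,
so `log x < x - 1` for `x ≠ 1`, applied to its eigenvalues, gives
`log det (S⁻¹ * V) < tr (S⁻¹ * V) - n` unless `S = V`. Taking `V = m⁻¹ • W`, this says that
`m⁻¹ • W` is the only minimizer of `S ↦ m * log det (c • S) + tr (S⁻¹ * W)`. The minimum is
`m * log det W` plus a constant, so minimizing over the parameters of `W` minimizes `log det W`.
-/

section PosDef

open scoped ComplexOrder

variable {𝕜 ι : Type*} [RCLike 𝕜] [Fintype ι] [DecidableEq ι]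

theorem log_norm_det_smul {c : ℝ} (hc : c ≠ 0) {A : Matrix ι ι 𝕜} (hA : A.det ≠ 0) :
    Real.log ‖(c • A).det‖ = Fintype.card ι * Real.log c + Real.log ‖A.det‖ := by
  rw [det_smul_of_tower, norm_smul, norm_pow,
    Real.log_mul (pow_ne_zero _ (norm_ne_zero_iff.2 hc)) (norm_ne_zero_iff.2 hA),
    Real.log_pow, Real.norm_eq_abs, Real.log_abs]

theorem eq_one_of_eigenvalues_eq_one {A : Matrix ι ι 𝕜} (hA : A.IsHermitian)
    (h : ∀ i, hA.eigenvalues i = 1) : A = 1 := by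
  have diagonal_eq_one : diagonal (RCLike.ofReal ∘ hA.eigenvalues) = (1 : Matrix ι ι 𝕜) := by
    simp [Function.comp_def, h]
  rw [hA.spectral_theorem, diagonal_eq_one, map_one]

theorem log_norm_det_eq_sum_log_eigenvalues {A : Matrix ι ι 𝕜} (hA : A.PosDef) :
    Real.log ‖A.det‖ = ∑ i, Real.log (hA.1.eigenvalues i) := by
  rw [hA.1.det_eq_prod_eigenvalues, norm_prod,
    Real.log_prod fun i _ ↦ norm_ne_zero_iff.2 (RCLike.ofReal_ne_zero.2 (hA.eigenvalues_pos i).ne')]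
  simp only [RCLike.norm_ofReal, Real.log_abs]

theorem log_norm_det_lt_re_trace_sub_card {A : Matrix ι ι 𝕜} (hA : A.PosDef) (hA_ne : A ≠ 1) :
    Real.log ‖A.det‖ < RCLike.re A.trace - Fintype.card ι := by
  obtain ⟨i, hi⟩ : ∃ i, hA.1.eigenvalues i ≠ 1 := by
    by_contra! h
    exact hA_ne (eq_one_of_eigenvalues_eq_one hA.1 h)
  calc
    Real.log ‖A.det‖ = ∑ i, Real.log (hA.1.eigenvalues i) := log_norm_det_eq_sum_log_eigenvalues hA
    _ < ∑ i, (hA.1.eigenvalues i - 1) :=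
      Finset.sum_lt_sum (fun j _ ↦ Real.log_le_sub_one_of_pos (hA.eigenvalues_pos j))
        ⟨i, Finset.mem_univ i, Real.log_lt_sub_one_of_pos (hA.eigenvalues_pos i) hi⟩
    _ = RCLike.re A.trace - Fintype.card ι := by
      simp [hA.1.trace_eq_sum_eigenvalues]

open scoped MatrixOrder in
theorem log_norm_det_mul_lt_re_trace_mul_sub_card {A B : Matrix ι ι 𝕜} (hA : A.PosDef)
    (hB : B.PosDef) (hAB : A * B ≠ 1) :
    Real.log ‖(A * B).det‖ < RCLike.re (A * B).trace - Fintype.card ι := by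
  obtain ⟨C, hC, rfl⟩ :=
    CStarAlgebra.isStrictlyPositive_iff_eq_star_mul_self.1 hA.isStrictlyPositive
  have conj_posDef : (C * B * star C).PosDef := hC.posDef_star_right_conjugate_iff.2 hB
  have conj_ne_one : C * B * star C ≠ 1 := fun h ↦
    hAB (by rw [mul_assoc, mul_eq_one_comm, h])
  have conj_lt := log_norm_det_lt_re_trace_sub_card conj_posDef conj_ne_one
  rwa [det_mul_comm, trace_mul_comm, ← mul_assoc] at conj_lt

theorem log_norm_det_sub_lt_re_trace_inv_mul_sub_card {S V : Matrix ι ι 𝕜} (hS : S.PosDef)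
    (hV : V.PosDef) (hSV : S ≠ V) :
    Real.log ‖V.det‖ - Real.log ‖S.det‖ < RCLike.re (S⁻¹ * V).trace - Fintype.card ι := by
  have inv_mul_ne_one : S⁻¹ * V ≠ 1 := fun h ↦
    hSV (by rw [← mul_one S, ← h, mul_nonsing_inv_cancel_left _ _ hS.det_pos.ne'.isUnit])
  have log_norm_det : Real.log ‖(S⁻¹ * V).det‖ = Real.log ‖V.det‖ - Real.log ‖S.det‖ := by
    rw [det_mul, det_nonsing_inv, Ring.inverse_eq_inv', norm_mul, norm_inv, inv_mul_eq_div,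
      Real.log_div (norm_ne_zero_iff.2 hV.det_pos.ne') (norm_ne_zero_iff.2 hS.det_pos.ne')]
  exact log_norm_det ▸ log_norm_det_mul_lt_re_trace_mul_sub_card hS.inv hV inv_mul_ne_one

/-- The covariance part of the Gaussian negative log-likelihood (times two, with `c = 2π` in the
real case) of `m` residuals whose scatter matrix is `V`, as a function of the covariance `S`.
For `c > 0` and positive definite `S` and `V`, the norm and the real part only turn elements of `𝕜`
that are already real into elements of `ℝ`. -/
noncomputable def covarianceObjective (c m : ℝ) (S V : Matrix ι ι 𝕜) : ℝ :=
  m * Real.log ‖(c • S).det‖ + RCLike.re (S⁻¹ * V).trace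

variable {c m : ℝ}

theorem covarianceObjective_inv_smul_self (hc : c ≠ 0) (hm : m ≠ 0) {V : Matrix ι ι 𝕜}
    (hV : V.det ≠ 0) :
    covarianceObjective c m (m⁻¹ • V) V =
      m * Real.log ‖V.det‖ + m * Fintype.card ι * (Real.log c - Real.log m + 1) := by
  have inv_mul : (m⁻¹ • V)⁻¹ * V = m • (1 : Matrix ι ι 𝕜) := by
    have : (m⁻¹ • V)⁻¹ = m • V⁻¹ := inv_eq_left_inv (by simp [hm, hV, smul_smul])
    rw [this, smul_mul_assoc, nonsing_inv_mul _ hV.isUnit]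
  rw [covarianceObjective, inv_mul, smul_smul, log_norm_det_smul (by positivity) hV,
    Real.log_mul hc (inv_ne_zero hm), Real.log_inv, trace_smul, trace_one, RCLike.smul_re,
    RCLike.natCast_re]
  ring

theorem covarianceObjective_inv_smul_self_lt (hc : c ≠ 0) (hm : 0 < m) {S V : Matrix ι ι 𝕜}
    (hS : S.PosDef) (hV : V.PosDef) (hSV : S ≠ m⁻¹ • V) :
    covarianceObjective c m (m⁻¹ • V) V < covarianceObjective c m S V := by
  have log_det_lt := log_norm_det_sub_lt_re_trace_inv_mul_sub_card hS (hV.smul (inv_pos.2 hm)) hSV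
  rw [log_norm_det_smul (inv_ne_zero hm.ne') hV.det_pos.ne', Real.log_inv, mul_smul_comm,
    trace_smul, RCLike.smul_re] at log_det_lt
  have scaled_lt := mul_lt_mul_of_pos_left log_det_lt hm
  rw [mul_sub m (m⁻¹ * _), mul_inv_cancel_left₀ hm.ne'] at scaled_lt
  rw [covarianceObjective_inv_smul_self hc hm.ne' hV.det_pos.ne', covarianceObjective,
    log_norm_det_smul hc hS.det_pos.ne']
  linarith

theorem mstep_lemma_full_general (hc : c ≠ 0) (hm : 0 < m) {P : Type*} (W : P → Matrix ι ι 𝕜)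
    (hW : ∀ p, (W p).PosDef) {S₀ : Matrix ι ι 𝕜} (hS₀ : S₀.PosDef) (p₀ : P)
    (hmin : ∀ S : Matrix ι ι 𝕜, S.PosDef → ∀ p,
      covarianceObjective c m S₀ (W p₀) ≤ covarianceObjective c m S (W p)) :
    S₀ = m⁻¹ • W p₀ ∧ ∀ p, Real.log ‖(W p₀).det‖ ≤ Real.log ‖(W p).det‖ := by
  have hV (p : P) : (m⁻¹ • W p).PosDef := (hW p).smul (inv_pos.2 hm)
  have hS₀_eq : S₀ = m⁻¹ • W p₀ := by
    by_contra hne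
    exact (covarianceObjective_inv_smul_self_lt hc hm hS₀ (hW p₀) hne).not_ge (hmin _ (hV p₀) p₀)
  refine ⟨hS₀_eq, fun p ↦ ?_⟩
  have min_le := hmin _ (hV p) p
  rw [hS₀_eq, covarianceObjective_inv_smul_self hc hm.ne' (hW p₀).det_pos.ne',
    covarianceObjective_inv_smul_self hc hm.ne' (hW p).det_pos.ne'] at min_le
  exact le_of_mul_le_mul_left (le_of_add_le_add_right min_le) hm

end PosDef

/-- Lemma A.2 (full statement): if `(Σ_w, 𝒫')` minimizes
`(Σ, 𝒫') ↦ ML·log det(2πΣ) + tr(Σ⁻¹ W(𝒫'))` over positive definite `Σ` and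
parameters `𝒫'`, where `W(𝒫')` is always positive definite, then
`Σ_w = (1/(ML)) W(𝒫')` and `𝒫'` minimizes `log det W(𝒫')`. -/
theorem mstep_lemma_full (n ML : ℕ) (hn : 1 ≤ n) (hML : 1 ≤ ML)
    {P : Type*} [Nonempty P]
    (W : P → Matrix (Fin n) (Fin n) ℝ) (hW : ∀ p, (W p).PosDef)
    (Sw : Matrix (Fin n) (Fin n) ℝ) (hSw : Sw.PosDef) (p₀ : P)
    (hmin : ∀ S : Matrix (Fin n) (Fin n) ℝ, S.PosDef → ∀ p : P,
      (ML : ℝ) * Real.log (((2 * Real.pi) • Sw).det) + (Sw⁻¹ * W p₀).trace ≤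
        (ML : ℝ) * Real.log (((2 * Real.pi) • S).det) + (S⁻¹ * W p).trace) :
    Sw = ((ML : ℝ))⁻¹ • W p₀ ∧ ∀ p : P, Real.log (W p₀).det ≤ Real.log (W p).det := by
  simpa only [Real.norm_eq_abs, Real.log_abs] using
    mstep_lemma_full_general Real.two_pi_pos.ne' (Nat.cast_pos.2 hML) W hW hSw p₀
      (by simpa only [covarianceObjective, Real.norm_eq_abs, Real.log_abs, RCLike.re_to_real]
        using hmin)
end

section
/- Let α, β ∈ ℝ, let u : ℝ → ℝ, and let x₁, x₂ : ℝ → ℝ be differentiable functions satisfying x₁'(t) = −α x₁(t) + u(t) and x₂'(t) = β( x₁(t)³ − x₂(t) ) for all t. Then the ℝ⁵-valued function Z(t) = (1, x₁(t), x₂(t), x₁(t)², x₁(t)³) satisfies, for all t, Z'(t) = M Z(t) + u(t) N Z(t), where M is the 5×5 matrix with rows (0,0,0,0,0), (0,−α,0,0,0), (0,0,−β,0,β), (0,0,0,−2α,0), (0,0,0,0,−3α), and N is the 5×5 matrix with rows (0,0,0,0,0), (1,0,0,0,0), (0,0,0,0,0), (0,2,0,0,0), (0,0,0,3,0). -/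
open Matrix

/-!
For a control-affine system `ẋ = f(x) + u g(x)` and observables `ψ`, the chain rule gives
`(ψ ∘ x)' = Dψ(x) f(x) + u Dψ(x) g(x)`. Hence the lifted dynamics are bilinear as soon as both
`Dψ · f` and `Dψ · g` are linear in `ψ`. For the slow manifold, differentiating along the drift
preserves each power of `x₁` and closes `x₂` up with `x₁³`, while differentiating along the constant
control field lowers powers of `x₁` by one; the constant observable is there to receive `x₁`.
-/

theorem hasDerivAt_comp_of_intertwines {𝕜 E F : Type*} [NontriviallyNormedField 𝕜]
    [NormedAddCommGroup E] [NormedSpace 𝕜 E] [NormedAddCommGroup F] [NormedSpace 𝕜 F]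
    {x : 𝕜 → E} {t u : 𝕜} {f g : E → E} {ψ : E → F} {ψ' : E →L[𝕜] F} {A B : Module.End 𝕜 F}
    (hψ : HasFDerivAt ψ ψ' (x t)) (hx : HasDerivAt x (f (x t) + u • g (x t)) t)
    (hA : ψ' (f (x t)) = A (ψ (x t))) (hB : ψ' (g (x t)) = B (ψ (x t))) :
    HasDerivAt (fun s => ψ (x s)) (A (ψ (x t)) + u • B (ψ (x t))) t := by
  rw [← hA, ← hB, ← map_smul, ← map_add]
  exact hψ.comp_hasDerivAt t hx

namespace SlowManifold

section Algebra

variable {R : Type*} [CommRing R]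

/-- The uncontrolled vector field `(x₁, x₂) ↦ (-αx₁, β(x₁³ - x₂))` of the slow-manifold system. -/
def drift (α β : R) (p : R × R) : R × R := (-α * p.1, β * (p.1 ^ 3 - p.2))

/-- The vector of observables `(1, x₁, x₂, x₁², x₁³)` spanning the Koopman-invariant subspace. -/
def lift (p : R × R) : Fin 5 → R := ![1, p.1, p.2, p.1 ^ 2, p.1 ^ 3]

/-- The matrix of differentiation along `drift α β`, acting on the observables `lift`. -/
def driftMatrix (α β : R) : Matrix (Fin 5) (Fin 5) R :=
  !![0, 0, 0, 0, 0;
     0, -α, 0, 0, 0;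
     0, 0, -β, 0, β;
     0, 0, 0, -2 * α, 0;
     0, 0, 0, 0, -3 * α]

variable (R) in
/-- The matrix of differentiation along the control direction `(1, 0)`, acting on the observables
`lift`. -/
def controlMatrix : Matrix (Fin 5) (Fin 5) R :=
  !![0, 0, 0, 0, 0;
     1, 0, 0, 0, 0;
     0, 0, 0, 0, 0;
     0, 2, 0, 0, 0;
     0, 0, 0, 3, 0]

theorem driftMatrix_mulVec_lift (α β : R) (p : R × R) :
    driftMatrix α β *ᵥ lift p =
      ![0, -α * p.1, β * (p.1 ^ 3 - p.2), -2 * α * p.1 ^ 2, -3 * α * p.1 ^ 3] := by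
  ext i
  fin_cases i <;>
    simp [driftMatrix, lift, mulVec, dotProduct, Fin.sum_univ_succ, mul_sub, neg_add_eq_sub]

theorem controlMatrix_mulVec_lift (p : R × R) :
    controlMatrix R *ᵥ lift p = ![0, 1, 0, 2 * p.1, 3 * p.1 ^ 2] := by
  ext i
  fin_cases i <;> simp [controlMatrix, lift, mulVec, dotProduct, Fin.sum_univ_succ]

end Algebra

section Calculus

variable {𝕜 : Type*} [NontriviallyNormedField 𝕜]

/-- The Fréchet derivative of `lift` at `p`. -/
def liftFDeriv (p : 𝕜 × 𝕜) : 𝕜 × 𝕜 →L[𝕜] (Fin 5 → 𝕜) :=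
  .pi ![0, .fst 𝕜 𝕜 𝕜, .snd 𝕜 𝕜 𝕜, (2 * p.1) • .fst 𝕜 𝕜 𝕜, (3 * p.1 ^ 2) • .fst 𝕜 𝕜 𝕜]

theorem liftFDeriv_apply (p v : 𝕜 × 𝕜) :
    liftFDeriv p v = ![0, v.1, v.2, 2 * p.1 * v.1, 3 * p.1 ^ 2 * v.1] := by
  ext i
  fin_cases i <;> rfl

theorem hasFDerivAt_lift (p : 𝕜 × 𝕜) : HasFDerivAt lift (liftFDeriv p) p := by
  refine hasFDerivAt_pi.2 fun i => ?_
  fin_cases i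
  · exact hasFDerivAt_const 1 p
  · exact hasFDerivAt_fst
  · exact hasFDerivAt_snd
  · simpa [lift, Function.comp_def] using (hasDerivAt_pow 2 p.1).comp_hasFDerivAt p hasFDerivAt_fst
  · simpa [lift, Function.comp_def] using (hasDerivAt_pow 3 p.1).comp_hasFDerivAt p hasFDerivAt_fst

theorem liftFDeriv_drift (α β : 𝕜) (p : 𝕜 × 𝕜) :
    liftFDeriv p (drift α β p) = driftMatrix α β *ᵥ lift p := by
  have square : 2 * p.1 * (-α * p.1) = -2 * α * p.1 ^ 2 := by ring
  have cube : 3 * p.1 ^ 2 * (-α * p.1) = -3 * α * p.1 ^ 3 := by ring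
  simp only [liftFDeriv_apply, drift, driftMatrix_mulVec_lift, square, cube]

theorem liftFDeriv_control (p : 𝕜 × 𝕜) :
    liftFDeriv p (1, 0) = controlMatrix 𝕜 *ᵥ lift p := by
  simp only [liftFDeriv_apply, controlMatrix_mulVec_lift, mul_one]

end Calculus

end SlowManifold

open SlowManifold in
theorem slow_manifold_bilinear_lift_general {𝕜 : Type*} [NontriviallyNormedField 𝕜]
    {α β u t : 𝕜} {x₁ x₂ : 𝕜 → 𝕜} (hx₁ : HasDerivAt x₁ (-α * x₁ t + u) t)
    (hx₂ : HasDerivAt x₂ (β * (x₁ t ^ 3 - x₂ t)) t) :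
    HasDerivAt (fun s => lift (x₁ s, x₂ s))
      (driftMatrix α β *ᵥ lift (x₁ t, x₂ t) + u • controlMatrix 𝕜 *ᵥ lift (x₁ t, x₂ t)) t := by
  have control_affine : HasDerivAt (fun s => (x₁ s, x₂ s))
      (drift α β (x₁ t, x₂ t) + u • (1, 0)) t := by
    simpa [drift] using hx₁.prodMk hx₂
  exact hasDerivAt_comp_of_intertwines (g := fun _ => (1, 0))
    (A := (driftMatrix α β).mulVecLin) (B := (controlMatrix 𝕜).mulVecLin)
    (hasFDerivAt_lift _) control_affine (liftFDeriv_drift α β _) (liftFDeriv_control _)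

/-- The actuated slow-manifold system `ẋ₁ = −αx₁ + u`, `ẋ₂ = β(x₁³ − x₂)` is exactly
bilinear on the lifted state `Z = (1, x₁, x₂, x₁², x₁³)`: `Ż = M Z + u N Z`. -/
theorem slow_manifold_bilinear_lift (α β : ℝ) (u : ℝ → ℝ) (x₁ x₂ : ℝ → ℝ)
    (hx₁ : ∀ t : ℝ, HasDerivAt x₁ (-α * x₁ t + u t) t)
    (hx₂ : ∀ t : ℝ, HasDerivAt x₂ (β * ((x₁ t) ^ 3 - x₂ t)) t)
    (M N : Matrix (Fin 5) (Fin 5) ℝ)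
    (hM : M = !![0, 0, 0, 0, 0;
                 0, -α, 0, 0, 0;
                 0, 0, -β, 0, β;
                 0, 0, 0, -2 * α, 0;
                 0, 0, 0, 0, -3 * α])
    (hN : N = !![0, 0, 0, 0, 0;
                 1, 0, 0, 0, 0;
                 0, 0, 0, 0, 0;
                 0, 2, 0, 0, 0;
                 0, 0, 0, 3, 0]) :
    ∀ t : ℝ, HasDerivAt
      (fun s => (![1, x₁ s, x₂ s, (x₁ s) ^ 2, (x₁ s) ^ 3] : Fin 5 → ℝ))
      (M.mulVec ![1, x₁ t, x₂ t, (x₁ t) ^ 2, (x₁ t) ^ 3] +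
        u t • N.mulVec ![1, x₁ t, x₂ t, (x₁ t) ^ 2, (x₁ t) ^ 3]) t := by
  subst hM hN
  exact fun t => slow_manifold_bilinear_lift_general (hx₁ t) (hx₂ t)
end
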